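/- Let G be a group and k a field. For every natural number n there is an isomorphism of k-vector spaces HH_n(k[G], k[G]) ≅ ⊕_{c ∈ ⟨G⟩} H_n(C_G(g_c); k), where ⟨G⟩ is the set of conjugacy classes of G, g_c is a chosen representative of the conjugacy class c, and C_G(g_c) is the centralizer of g_c in G. -/

import Mathlib

open TensorProduct MulOpposite CategoryTheory

section Machinery

variable (k : Type) [CommRing k] (S : Type) [Ring S] [Algebra k S] (P : Set (S × S))

/-- The `k`-submodule of (the restriction of scalars of) an `S`-module `N` generated by all
differences `p.1 • n - p.2 • n` for pairs `p ∈ P` and `n ∈ N`. -/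
noncomputable def relSub (N : ModuleCat S) :
    Submodule k ((ModuleCat.restrictScalars (algebraMap k S)).obj N) :=
  Submodule.span k {x | ∃ p ∈ P, ∃ n : N, x = p.1 • n - p.2 • n}

/-- The "coinvariants"-type additive functor sending an `S`-module `N` to its quotient,
as a `k`-module, by the span of all elements `p.1 • n - p.2 • n` for `p ∈ P`, `n ∈ N`. -/
noncomputable def coinvFunctor : ModuleCat S ⥤ ModuleCat k where
  obj N := ModuleCat.of k (((ModuleCat.restrictScalars (algebraMap k S)).obj N) ⧸ relSub k S P N)
  map {N N'} f := ModuleCat.ofHom (Submodule.mapQ (relSub k S P N) (relSub k S P N')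
      ((ModuleCat.restrictScalars (algebraMap k S)).map f).hom (by
    rw [relSub, Submodule.span_le]
    rintro x ⟨p, hp, n, rfl⟩
    have : ((ModuleCat.restrictScalars (algebraMap k S)).map f) (p.1 • n - p.2 • n)
        = p.1 • (f n) - p.2 • (f n) := by
      show f (p.1 • n - p.2 • n) = _
      rw [map_sub, f.hom.map_smul, f.hom.map_smul]
    exact Submodule.subset_span ⟨p, hp, f n, this⟩))
  map_id _ := ModuleCat.hom_ext (Submodule.linearMap_qext _ (LinearMap.ext fun _ => rfl))
  map_comp _ _ := ModuleCat.hom_ext (Submodule.linearMap_qext _ (LinearMap.ext fun _ => rfl))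

instance : (coinvFunctor k S P).Additive where
  map_add := ModuleCat.hom_ext (Submodule.linearMap_qext _ (LinearMap.ext fun _ => rfl))

end Machinery

/-- Hochschild homology `HH_n(A, A)` of a `k`-algebra `A`: the `n`-th left derived functor
(that is, `Tor_n` over the enveloping algebra `A ⊗[k] Aᵐᵒᵖ`) of the coinvariants functor
`N ↦ N / span { a•n - n•a }` (which is naturally isomorphic to `A ⊗_{A ⊗[k] Aᵐᵒᵖ} -`),
evaluated at the `A`-bimodule `A` itself. -/
noncomputable def HochschildHomology (k : Type) [CommRing k] (A : Type) [Ring A] [Algebra k A]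
    (n : ℕ) : ModuleCat k :=
  letI : Module (A ⊗[k] Aᵐᵒᵖ) A := TensorProduct.Algebra.module
  ((coinvFunctor k (A ⊗[k] Aᵐᵒᵖ)
      {p | ∃ a : A, p = (a ⊗ₜ[k] (1 : Aᵐᵒᵖ), (1 : A) ⊗ₜ[k] op a)}).leftDerived n).obj
    (ModuleCat.of (A ⊗[k] Aᵐᵒᵖ) A)

/-- Group homology `H_n(G; k)` with trivial coefficients `k`: the `n`-th left derived functor
(that is, `Tor_n` over the group algebra `MonoidAlgebra k G`) of the coinvariants functor
`N ↦ N / span { g•n - n }`, evaluated at the trivial one-dimensional representation `k`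
(made a `MonoidAlgebra k G`-module via the augmentation map). -/
noncomputable def GroupHomology (k : Type) [CommRing k] (G : Type) [Group G] (n : ℕ) :
    ModuleCat k :=
  letI : Module (MonoidAlgebra k G) k :=
    Module.compHom k (MonoidAlgebra.lift k k G 1).toRingHom
  ((coinvFunctor k (MonoidAlgebra k G)
      {p | ∃ g : G, p = (MonoidAlgebra.single g 1, 1)}).leftDerived n).obj
    (ModuleCat.of (MonoidAlgebra k G) k)

section Cat
open CategoryTheory.Limits DirectSum
universe v u v' u' v'' u''

theorem hgder {C : Type u} [Category.{v} C] [Abelian C]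
    {D : Type u'} [Category.{v'} D] [Abelian D] [HasProjectiveResolutions D]
    {E : Type u''} [Category.{v''} E] [Abelian E]
    (F : C ⥤ D) [F.Additive] [F.PreservesProjectiveObjects] [F.PreservesHomology]
    (T : D ⥤ E) [T.Additive] {X : C} (P : ProjectiveResolution X) {Y : D} (e : F.obj X ≅ Y)
    (n : ℕ) :
    Nonempty ((T.leftDerived n).obj Y ≅ ((P.complex.sc n).map (F ⋙ T)).homology) :=
  ⟨(T.leftDerived n).mapIso e.symm ≪≫ (F.mapProjectiveResolution P).isoLeftDerivedObj T n⟩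

theorem hgsum {k : Type} [Ring k] {C : Type u} [Category.{v} C] [Abelian C] {J : Type}
    (Φ : J → C ⥤ ModuleCat.{0} k) [∀ j, (Φ j).Additive] (T : C ⥤ ModuleCat.{0} k) [T.Additive]
    (ι : ∀ j, Φ j ⟶ T) [DecidableEq J]
    (h : ∀ M, Function.Bijective (DirectSum.toModule k J (T.obj M) (fun c => ((ι c).app M).hom)))
    (S : ShortComplex C) :
    Nonempty ((S.map T).homology ≃ₗ[k] ⨁ j, (S.map (Φ j)).homology) := by
  let Ψ : C ⥤ (Discrete J ⥤ ModuleCat.{0} k) := (Discrete.functor Φ).flip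
  have hz : Ψ.PreservesZeroMorphisms := ⟨fun X Y => by
    ext ⟨j⟩ : 2
    exact (Φ j).map_zero X Y⟩
  let α : Ψ ⋙ colim ⟶ T :=
    { app := fun M => colimit.desc (Ψ.obj M) ⟨T.obj M, Discrete.natTrans fun j => (ι j.as).app M⟩
      naturality := fun M N f => by
        apply colimit.hom_ext
        rintro ⟨j⟩
        simp
        exact (ι j).naturality f }
  have hα : ∀ M, IsIso (α.app M) := by
    intro M
    have hh : IsIso (ModuleCat.ofHom (DirectSum.toModule k J (T.obj M) (fun c => ((ι c).app M).hom))) :=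
      (ConcreteCategory.isIso_iff_bijective _).2 (h M)
    have e : Ψ.obj M ≅ Discrete.functor fun j => (Φ j).obj M := Discrete.natIso fun j => Iso.refl _
    have : α.app M = (HasColimit.isoOfNatIso (Discrete.natIso fun j => Iso.refl _ :
        Ψ.obj M ≅ Discrete.functor fun j => (Φ j).obj M)).hom ≫ 
       (ModuleCat.coprodIsoDirectSum (fun j => (Φ j).obj M)).hom ≫
       (ModuleCat.ofHom (DirectSum.toModule k J (T.obj M) (fun c => ((ι c).app M).hom))) := by
      apply colimit.hom_ext
      rintro ⟨j⟩
      have h1 : colimit.ι (Ψ.obj M) ⟨j⟩ ≫ α.app M = (ι j).app M := by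
        simp [α]
      have h2 := ModuleCat.ι_coprodIsoDirectSum_hom (R := k) (fun j => (Φ j).obj M) j
      rw [h1, HasColimit.isoOfNatIso_ι_hom_assoc]
      have h3 : (ι j).app M = ModuleCat.ofHom (DirectSum.lof k J (fun j => (Φ j).obj M) j) ≫
        (ModuleCat.ofHom (DirectSum.toModule k J (T.obj M) (fun c => ((ι c).app M).hom))) := by
        ext x
        simp
      rw [h3, ← h2]
      simp
      rw [← h2, Category.assoc]
    rw [this]
    infer_instance
  have : IsIso α := NatIso.isIso_of_isIso_app α
  have i1 : (S.map (Ψ ⋙ colim)) ≅ S.map T := S.mapNatIso (asIso α)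
  have i2 := (S.map Ψ).mapHomologyIso (colim : (Discrete J ⥤ ModuleCat.{0} k) ⥤ ModuleCat.{0} k)
  have i3 : ∀ j, (S.map (Φ j)).homology ≅ (S.map Ψ).homology.obj ⟨j⟩ := fun j =>
    (S.map Ψ).mapHomologyIso ((evaluation (Discrete J) (ModuleCat.{0} k)).obj ⟨j⟩)
  have i4 : (S.map Ψ).homology ≅ Discrete.functor fun j => (S.map (Φ j)).homology :=
    Discrete.natIso fun j => (i3 j.as).symm
  exact ⟨(ShortComplex.homologyMapIso i1.symm ≪≫ i2 ≪≫ colim.mapIso i4 ≪≫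
    ModuleCat.coprodIsoDirectSum _).toLinearEquiv⟩
end Cat

section Alg
variable (k : Type) [CommRing k] (G : Type) [Group G]

abbrev hgE : Type := MonoidAlgebra k G ⊗[k] (MonoidAlgebra k G)ᵐᵒᵖ

section
variable (M : Type) [AddCommGroup M] [Module k M] [Module (MonoidAlgebra k G) M]
  [IsScalarTower k (MonoidAlgebra k G) M]

noncomputable def hgL : MonoidAlgebra k G →ₐ[k] Module.End k (G →₀ M) :=
  MonoidAlgebra.lift k _ G
    { toFun := fun g => Finsupp.lmapDomain M k (g * ·) ∘ₗ
        Finsupp.mapRange.linearMap (Algebra.lsmul k k M (MonoidAlgebra.single g (1:k)))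
      map_one' := by
        ext x m : 2
        simp [← MonoidAlgebra.one_def]
      map_mul' := fun g h => by
        ext x m : 2
        simp [smul_smul, MonoidAlgebra.single_mul_single, mul_assoc] }

noncomputable def hgR : (MonoidAlgebra k G)ᵐᵒᵖ →ₐ[k] Module.End k (G →₀ M) :=
  AlgHom.opComm (MonoidAlgebra.lift k (Module.End k (G →₀ M))ᵐᵒᵖ G
    { toFun := fun g => op (Finsupp.lmapDomain M k (· * g))
      map_one' := by
        congr 1
        ext x m : 2
        simp
      map_mul' := fun g h => by
        rw [← op_mul]
        congr 1
        ext x m : 2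
        simp [mul_assoc] })

theorem hgL_apply (g x : G) (r : k) (m : M) : hgL k G M (MonoidAlgebra.single g r) (Finsupp.single x m)
    = Finsupp.single (g * x) (MonoidAlgebra.single g r • m) := by
  have : (MonoidAlgebra.single g r : MonoidAlgebra k G) = r • MonoidAlgebra.single g 1 := by simp
  rw [this, smul_assoc]
  simp [hgL]

set_option linter.unusedSectionVars false in
theorem hgR_apply (h x : G) (r : k) (m : M) : hgR k G M (op (MonoidAlgebra.single h r)) (Finsupp.single x m)
    = Finsupp.single (x * h) (r • m) := by
  simp [hgR]

noncomputable def hgLR : hgE k G →ₐ[k] Module.End k (G →₀ M) :=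
  Algebra.TensorProduct.lift (hgL k G M) (hgR k G M) (by
    intro a b
    induction b using MulOpposite.rec' with | _ b
    induction a using MonoidAlgebra.induction_linear with
    | zero => simp
    | add a a' h h' => rw [map_add]; exact h.add_left h'
    | single g r =>
    induction b using MonoidAlgebra.induction_linear with
    | zero => simp
    | add a a' h h' => rw [MulOpposite.op_add, map_add]; exact h.add_right h'
    | single h s =>
      change _ * _ = _ * _
      ext x m : 2
      simp [hgL_apply, hgR_apply, mul_assoc]
      rw [← Algebra.lsmul_apply k k M (MonoidAlgebra.single g r) (s • m), map_smul]
      rfl)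

end

variable (M : Type) [AddCommGroup M] [Module (MonoidAlgebra k G) M]

def hgInd (M : Type) [AddCommGroup M] [Module (MonoidAlgebra k G) M] : Type := G →₀ M

noncomputable instance : AddCommGroup (hgInd k G M) := inferInstanceAs (AddCommGroup (G →₀ M))

theorem hgtower : letI : Module k M := Module.compHom M (algebraMap k (MonoidAlgebra k G))
    IsScalarTower k (MonoidAlgebra k G) M :=
  letI : Module k M := Module.compHom M (algebraMap k (MonoidAlgebra k G))
  IsScalarTower.of_algebraMap_smul fun r m => rfl

noncomputable instance : Module (hgE k G) (hgInd k G M) :=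
  letI : Module k M := Module.compHom M (algebraMap k (MonoidAlgebra k G))
  haveI := hgtower k G M
  Module.compHom (G →₀ M) (hgLR k G M).toRingHom

variable {M}
noncomputable def hgs (x : G) : M →+ hgInd k G M := Finsupp.singleAddHom x

variable {k G}
theorem hgact (g h x : G) (r : k) (m : M) :
    ((MonoidAlgebra.single g r ⊗ₜ[k] op (MonoidAlgebra.single h (1:k)) : hgE k G)) • hgs k G x m =
      hgs k G (g * x * h) (MonoidAlgebra.single g r • m) := by
  letI : Module k M := Module.compHom M (algebraMap k (MonoidAlgebra k G))
  haveI := hgtower k G M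
  change hgLR k G M (MonoidAlgebra.single g r ⊗ₜ[k] op (MonoidAlgebra.single h (1:k))) (Finsupp.single x m) = Finsupp.single _ _
  simp [hgLR, hgL_apply, hgR_apply, mul_assoc]

theorem hgInd_ind {p : hgInd k G M → Prop} (z : hgInd k G M) (h0 : p 0)
    (ha : ∀ a b, p a → p b → p (a + b)) (hs : ∀ x m, p (hgs k G x m)) : p z :=
  Finsupp.induction_linear z h0 ha hs

theorem hghom_ext {B : Type} [AddCommMonoid B] {f f' : hgInd k G M →+ B} 
   (h : ∀ x m, f (hgs k G x m) = f' (hgs k G x m)) : f = f' := 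
   Finsupp.addHom_ext h

theorem hgE_ind {p : hgE k G → Prop} (z : hgE k G) (h0 : p 0)
    (ha : ∀ a b, p a → p b → p (a + b)) 
    (hs : ∀ g h r, p (MonoidAlgebra.single g r ⊗ₜ[k] op (MonoidAlgebra.single h (1:k)))) : p z := by
  induction z using TensorProduct.induction_on with
  | zero => exact h0
  | add a b h h' => exact ha _ _ h h'
  | tmul a b =>
    induction b using MulOpposite.rec' with | _ b
    induction a using MonoidAlgebra.induction_linear with
    | zero => simpa using h0
    | add a a' h h' => rw [TensorProduct.add_tmul]; exact ha _ _ h h'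
    | single g r =>
    induction b using MonoidAlgebra.induction_linear with
    | zero => simpa using h0
    | add a a' h h' => rw [MulOpposite.op_add, TensorProduct.tmul_add]; exact ha _ _ h h'
    | single h s =>
      have : (MonoidAlgebra.single h s : MonoidAlgebra k G) = s • MonoidAlgebra.single h 1 := by simp
      rw [this, MulOpposite.op_smul, ← TensorProduct.smul_tmul]
      simpa using hs g h (s * r)

def hgElin {N N' : Type} [AddCommMonoid N] [AddCommMonoid N'] [Module (hgE k G) N] [Module (hgE k G) N']
    (f : N →+ N') (hf : ∀ g h r n,
     f ((MonoidAlgebra.single g r ⊗ₜ[k] op (MonoidAlgebra.single h (1:k)) : hgE k G) • n) =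
     (MonoidAlgebra.single g r ⊗ₜ[k] op (MonoidAlgebra.single h (1:k)) : hgE k G) • f n) : 
    N →ₗ[hgE k G] N' :=
  { f with
    map_smul' := fun e n => by
      change f (e • n) = e • f n
      induction e using hgE_ind with
      | h0 => exact (congrArg f (zero_smul (hgE k G) n)).trans ((map_zero f).trans (zero_smul (hgE k G) (f n)).symm)
      | ha a b h h' => rw [add_smul, add_smul, map_add, h, h']
      | hs g h r => exact hf g h r n }

noncomputable def hgElift {N : Type} [AddCommMonoid N] (f : G → M →+ N) : hgInd k G M →+ N := Finsupp.liftAddHom f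

@[simp] theorem hgElift_s {N : Type} [AddCommMonoid N] (f : G → M →+ N) (x : G) (m : M) :
   hgElift f (hgs k G x m) = f x m := Finsupp.liftAddHom_apply_single f x m

noncomputable def hgmap {M' : Type} [AddCommGroup M'] [Module (MonoidAlgebra k G) M'] (f : M →ₗ[MonoidAlgebra k G] M') :
  hgInd k G M →ₗ[hgE k G] hgInd k G M' :=
  hgElin (hgElift fun x => (hgs k G x).comp f.toAddMonoidHom) (by
    intro g h r n
    induction n using hgInd_ind with
    | h0 => simp
    | ha a b h h' => simp only [smul_add, map_add, h, h']
    | hs x m => simp [hgact])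

@[simp] theorem hgmap_s {M' : Type} [AddCommGroup M'] [Module (MonoidAlgebra k G) M'] (f : M →ₗ[MonoidAlgebra k G] M') (x : G) (m : M) :
   hgmap f (hgs k G x m) = hgs k G x (f m) := by
  exact hgElift_s (fun x => (hgs k G x).comp f.toAddMonoidHom) x m

theorem hglext {N : Type} [AddCommGroup N] [Module (hgE k G) N] {f f' : hgInd k G M →ₗ[hgE k G] N} 
   (h : ∀ x m, f (hgs k G x m) = f' (hgs k G x m)) : f = f' := by
   ext z
   exact DFunLike.congr_fun (hghom_ext (f := f.toAddMonoidHom) (f' := f'.toAddMonoidHom) h) z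

variable (k G) in
noncomputable def hgIndF : ModuleCat.{0} (MonoidAlgebra k G) ⥤ ModuleCat.{0} (hgE k G) where
  obj M := ModuleCat.of _ (hgInd k G M)
  map f := ModuleCat.ofHom (hgmap f.hom)
  map_id M := ModuleCat.hom_ext (hglext fun x m => by simp)
  map_comp f g := ModuleCat.hom_ext (hglext fun x m => by simp)

instance : (hgIndF k G).Additive where
  map_add {M N f g} := ModuleCat.hom_ext (hglext fun x m => by
    change hgmap (f.hom + g.hom) _ = hgmap f.hom _ + hgmap g.hom _
    simp)

noncomputable def hgc (x : G) : hgInd k G M →+ M := Finsupp.applyAddHom x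

theorem hgc_s [DecidableEq G] (x y : G) (m : M) : hgc x (hgs k G y m) = if y = x then m else 0 :=
  Finsupp.single_apply

theorem hg_decomp (z : hgInd k G M) : ∃ s : Finset G, z = ∑ x ∈ s, hgs k G x (hgc x z) :=
  ⟨Finsupp.support z, (Finsupp.sum_single (show G →₀ M from z)).symm⟩

theorem hgmap_c {M' : Type} [AddCommGroup M'] [Module (MonoidAlgebra k G) M']
    (f : M →ₗ[MonoidAlgebra k G] M') (z : hgInd k G M) (x : G) :
    hgc x (hgmap f z) = f (hgc x z) := by
  classical
  induction z using hgInd_ind with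
  | h0 => simp only [map_zero]
  | ha a b h h' => simp only [map_add, h, h']
  | hs y m =>
    rw [hgmap_s, hgc_s, hgc_s]
    split_ifs <;> simp

theorem hgmap_exact {M₁ M₂ M₃ : Type} [AddCommGroup M₁] [Module (MonoidAlgebra k G) M₁]
    [AddCommGroup M₂] [Module (MonoidAlgebra k G) M₂]
    [AddCommGroup M₃] [Module (MonoidAlgebra k G) M₃]
    (f : M₁ →ₗ[MonoidAlgebra k G] M₂) (g : M₂ →ₗ[MonoidAlgebra k G] M₃)
    (h : Function.Exact f g) : Function.Exact (hgmap f) (hgmap g) := by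
  intro z
  constructor
  · intro hz
    have h1 : ∀ x, g (hgc x z) = 0 := fun x => by
      rw [← hgmap_c g z x, hz, map_zero]
    choose u hu using fun x => (h _).1 (h1 x)
    obtain ⟨s, hs⟩ := hg_decomp z
    refine ⟨∑ x ∈ s, hgs k G x (u x), ?_⟩
    rw [map_sum]
    conv_rhs => rw [hs]
    refine Finset.sum_congr rfl fun x _ => ?_
    rw [hgmap_s, hu x]
  · rintro ⟨y, rfl⟩
    change (hgmap g ∘ₗ hgmap f) y = (0 : _ →ₗ[hgE k G] hgInd k G M₃) y
    congr 1
    refine hglext fun x m => ?_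
    simp [h.apply_apply_eq_zero]

instance : (hgIndF k G).PreservesHomology := by
  refine ((Functor.exact_tfae (hgIndF k G)).out 1 2).1 ?_
  intro S h
  rw [CategoryTheory.ShortComplex.ShortExact.moduleCat_exact_iff_function_exact] at h ⊢
  exact hgmap_exact S.f.hom S.g.hom h

end Alg

section Alg3
variable (k : Type) [CommRing k] (G : Type) [Group G]

noncomputable def hgφ : MonoidAlgebra k G →ₐ[k] hgE k G :=
  MonoidAlgebra.lift k (hgE k G) G
    { toFun := fun g => MonoidAlgebra.single g (1:k) ⊗ₜ[k] op (MonoidAlgebra.single g⁻¹ (1:k))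
      map_one' := by simp [← MonoidAlgebra.one_def, Algebra.TensorProduct.one_def]
      map_mul' := fun g h => by
        simp [Algebra.TensorProduct.tmul_mul_tmul, ← op_mul, MonoidAlgebra.single_mul_single] }

variable {k G}
theorem hgφ_single (g : G) (r : k) : hgφ k G (MonoidAlgebra.single g r) =
    MonoidAlgebra.single g r ⊗ₜ[k] op (MonoidAlgebra.single g⁻¹ (1:k)) := by
  simp [hgφ, TensorProduct.smul_tmul']

theorem hgsec {P : Type} [AddCommGroup P] [Module (MonoidAlgebra k G) P]
    [Module.Projective (MonoidAlgebra k G) P]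
    {X : Type} [AddCommMonoid X] [Module (hgE k G) X] (f : X →ₗ[hgE k G] hgInd k G P)
    (hf : Function.Surjective f) : ∃ h : hgInd k G P →ₗ[hgE k G] X, f.comp h = .id := by
  letI : Module (MonoidAlgebra k G) X := Module.compHom X (hgφ k G).toRingHom
  letI : Module (MonoidAlgebra k G) (hgInd k G P) := Module.compHom _ (hgφ k G).toRingHom
  have sX : ∀ (a : MonoidAlgebra k G) (x : X), a • x = hgφ k G a • x := fun _ _ => rfl
  have sP : ∀ (a : MonoidAlgebra k G) (x : hgInd k G P), a • x = hgφ k G a • x := fun _ _ => rfl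
  let f' : X →ₗ[MonoidAlgebra k G] hgInd k G P :=
    { f.toAddMonoidHom with map_smul' := fun a x => f.map_smul (hgφ k G a) x }
  let j : P →ₗ[MonoidAlgebra k G] hgInd k G P :=
    { hgs k G 1 with
      map_smul' := fun a m => by
        change hgs k G 1 (a • m) = hgφ k G a • hgs k G 1 m
        induction a using MonoidAlgebra.induction_linear with
        | zero =>
          rw [zero_smul, map_zero, map_zero]
          exact (zero_smul (hgE k G) (hgs k G 1 m)).symm
        | add a b h h' => simp only [add_smul, map_add, h, h']
        | single g r => rw [hgφ_single, hgact]; simp }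
  obtain ⟨l, hl⟩ := Module.projective_lifting_property f' j hf
  have hl' : ∀ m, f (l m) = hgs k G 1 m := fun m => DFunLike.congr_fun hl m
  have key : ∀ g h (r : k) x (m : P), 
     (MonoidAlgebra.single (1:G) (1:k) ⊗ₜ[k] op (MonoidAlgebra.single (g * x * h) (1:k)) : hgE k G) • l (MonoidAlgebra.single g r • m)
     = (MonoidAlgebra.single g r ⊗ₜ[k] op (MonoidAlgebra.single h (1:k)) : hgE k G) • 
      (MonoidAlgebra.single (1:G) (1:k) ⊗ₜ[k] op (MonoidAlgebra.single x (1:k)) : hgE k G) • l m := by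
    intro g h r x m
    rw [map_smul, sX, hgφ_single, smul_smul, smul_smul]
    congr 1
    simp [Algebra.TensorProduct.tmul_mul_tmul, ← op_mul, MonoidAlgebra.single_mul_single, mul_assoc]
  let H := hgElift (k := k) (G := G) (M := P) fun x => (DistribSMul.toAddMonoidHom X (MonoidAlgebra.single (1:G) (1:k) ⊗ₜ[k] op (MonoidAlgebra.single x (1:k)) : hgE k G)).comp l.toAddMonoidHom
  have hH : ∀ x m, H (hgs k G x m) = (MonoidAlgebra.single (1:G) (1:k) ⊗ₜ[k] op (MonoidAlgebra.single x (1:k)) : hgE k G) • l m := fun x m => hgElift_s _ x m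
  refine ⟨hgElin H ?_, ?_⟩
  · intro g h r n
    induction n using hgInd_ind with
    | h0 => simp
    | ha a b h h' => simp only [smul_add, map_add, h, h']
    | hs x m => rw [hgact, hH, hH, key]
  · refine hglext fun x m => ?_
    change f (H _) = _
    rw [hH, map_smul, hl', hgact]
    simp [← MonoidAlgebra.one_def]

instance : (hgIndF k G).PreservesProjectiveObjects where
  projective_obj {P} hP := by
    have : Module.Projective (MonoidAlgebra k G) P := P.projective_of_module_projective
    have : Module.Projective (hgE k G) (hgInd k G P) :=
      Module.Projective.of_lifting_property'' fun f hf => hgsec f hf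
    exact (IsProjective.iff_projective _).1 this

variable (k G) in
noncomputable def hgTriv : ModuleCat.{0} (MonoidAlgebra k G) :=
  letI : Module (MonoidAlgebra k G) k :=
    Module.compHom k (MonoidAlgebra.lift k k G 1).toRingHom
  ModuleCat.of (MonoidAlgebra k G) k

theorem hgTriv_smul (g : G) (r s : k) : (MonoidAlgebra.single g r • (show hgTriv k G from s) : hgTriv k G) = (r * s : k) := by
  change (MonoidAlgebra.lift k k G 1) (MonoidAlgebra.single g r) * s = _
  simp

variable (k G) in
noncomputable def hgA : ModuleCat.{0} (hgE k G) :=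
  letI : Module (hgE k G) (MonoidAlgebra k G) := TensorProduct.Algebra.module
  ModuleCat.of (hgE k G) (MonoidAlgebra k G)

theorem hgA_smul (g h x : G) (r s : k) : ((MonoidAlgebra.single g r ⊗ₜ[k] op (MonoidAlgebra.single h (1:k)) : hgE k G) • (show hgA k G from MonoidAlgebra.single x s) : hgA k G) = (MonoidAlgebra.single (g * x * h) (r * s) : MonoidAlgebra k G) := by
  refine (TensorProduct.Algebra.smul_def (R := k) (MonoidAlgebra.single g r) (op (MonoidAlgebra.single h (1:k))) (MonoidAlgebra.single x s : MonoidAlgebra k G)).trans ?_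
  simp [MonoidAlgebra.single_mul_single, mul_assoc]

theorem hgIndTriv : Nonempty ((hgIndF k G).obj (hgTriv k G) ≅ hgA k G) := by
  let e : hgInd k G (hgTriv k G) ≃+ hgA k G := (MonoidAlgebra.coeffAddEquiv (R := k) (M := G)).symm
  have he : ∀ x (s : k), e (hgs k G x (show hgTriv k G from s)) = (MonoidAlgebra.single x s : MonoidAlgebra k G) := fun x s => by
    rfl
  let f : hgInd k G (hgTriv k G) →ₗ[hgE k G] hgA k G := hgElin e.toAddMonoidHom (by
    intro g h r n
    change e _ = _ • e _
    induction n using hgInd_ind with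
    | h0 => rw [smul_zero, map_zero, smul_zero]
    | ha a b h h' => simp only [smul_add, map_add, h, h']
    | hs x m => 
      rw [hgact]
      erw [hgTriv_smul g r m]
      erw [he, he, hgA_smul])
  exact ⟨(LinearEquiv.ofBijective f e.bijective).toModuleIso⟩

end Alg3

section Res
variable {k : Type} [CommRing k] {G : Type} [Group G]

variable (k) in
noncomputable def hgψ (C : Subgroup G) : MonoidAlgebra k C →+* MonoidAlgebra k G :=
  MonoidAlgebra.mapDomainRingHom k C.subtype

theorem hgψ_single (C : Subgroup G) (c : C) (r : k) :
    hgψ k C (MonoidAlgebra.single c r) = MonoidAlgebra.single (c : G) r := by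
  simp [hgψ]

theorem hg_res_sec (C : Subgroup G) {X : Type} [AddCommMonoid X] [Module (MonoidAlgebra k C) X]
    (f : X →+ MonoidAlgebra k G) (hfl : ∀ a x, f (a • x) = hgψ k C a * f x)
    (hf : Function.Surjective f) :
    ∃ h : MonoidAlgebra k G →+ X, (∀ z, f (h z) = z) ∧ ∀ a z, h (hgψ k C a * z) = a • h z := by
  let t : G → G := fun g => (Quotient.mk (QuotientGroup.rightRel C) g).out
  have ht : ∀ g, g * (t g)⁻¹ ∈ C := fun g => by
    have := Quotient.mk_out (s := QuotientGroup.rightRel C) g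
    exact QuotientGroup.rightRel_apply.1 this
  have ht2 : ∀ (c : C) g, t (c * g) = t g := fun c g => by
    have : Quotient.mk (QuotientGroup.rightRel C) (c * g) = Quotient.mk (QuotientGroup.rightRel C) g := by
      apply Quotient.sound
      apply QuotientGroup.rightRel_apply.2
      simp
    simp only [t, this]
  choose u hu using hf
  let H : MonoidAlgebra k G →+ X := (Finsupp.liftAddHom fun g : G => 
    ((AddMonoidHom.flip (AddMonoidHom.smul (R := MonoidAlgebra k C) (M := X))) (u (MonoidAlgebra.single (t g) 1))).comp
      (MonoidAlgebra.singleAddHom (⟨g * (t g)⁻¹, ht g⟩ : C))).comp 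
      (MonoidAlgebra.coeffAddEquiv (R := k) (M := G)).toAddMonoidHom
  have hH : ∀ g r, H (MonoidAlgebra.single g r) = (MonoidAlgebra.single (⟨g * (t g)⁻¹, ht g⟩ : C) r : MonoidAlgebra k C) • u (MonoidAlgebra.single (t g) 1) := by
    intro g r
    exact (Finsupp.liftAddHom_apply_single _ g r)
  refine ⟨H, ?_, ?_⟩
  · intro z
    induction z using MonoidAlgebra.induction_linear with
    | zero => simp only [map_zero]
    | add a b h h' => simp only [map_add, h, h']
    | single g r =>
      rw [hH, hfl, hgψ_single, hu]
      simp [MonoidAlgebra.single_mul_single]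
  · intro a z
    induction a using MonoidAlgebra.induction_linear with
    | zero => simp only [map_zero, zero_mul, zero_smul]
    | add a b h h' => simp only [map_add, add_mul, add_smul, h, h']
    | single c s =>
    induction z using MonoidAlgebra.induction_linear with
    | zero => simp only [map_zero, mul_zero, smul_zero]
    | add a b h h' => simp only [map_add, mul_add, smul_add, h, h']
    | single g r =>
      rw [hgψ_single, MonoidAlgebra.single_mul_single, hH, hH, smul_smul, MonoidAlgebra.single_mul_single]
      have e : (⟨c * g * (t (c * g))⁻¹, ht _⟩ : C) = c * ⟨g * (t g)⁻¹, ht g⟩ := by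
        ext
        simp [ht2, mul_assoc]
      rw [e, ht2]

noncomputable abbrev hgRes (C : Subgroup G) :
    ModuleCat.{0} (MonoidAlgebra k G) ⥤ ModuleCat.{0} (MonoidAlgebra k C) :=
  ModuleCat.restrictScalars (hgψ k C)

theorem hg_res_proj (C : Subgroup G) : Module.Projective (MonoidAlgebra k C)
    ((hgRes C).obj (ModuleCat.of (MonoidAlgebra k G) (MonoidAlgebra k G))) := by
  refine Module.Projective.of_lifting_property'' fun f hf => ?_
  obtain ⟨h, h1, h2⟩ := hg_res_sec C f.toAddMonoidHom (fun a x => f.map_smul a x) hf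
  exact ⟨{ h with map_smul' := fun a z => h2 a z }, LinearMap.ext h1⟩

instance (C : Subgroup G) : (hgRes (k := k) C).PreservesProjectiveObjects := by
  have : (ModuleCat.coextendScalars.{0} (hgψ k C)).PreservesEpimorphisms := by
    constructor
    intro X Y f hf
    have := hg_res_proj (k := k) C
    rw [ModuleCat.epi_iff_surjective] at hf ⊢
    intro y
    obtain ⟨h, hh⟩ := Module.projective_lifting_property f.hom (ModuleCat.CoextendScalars.equiv _ _ y) hf
    exact ⟨(ModuleCat.CoextendScalars.equiv _ _).symm h, hh⟩
  exact Functor.preservesProjectiveObjects_of_adjunction_of_preservesEpimorphisms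
    (ModuleCat.restrictCoextendScalarsAdj.{0} (hgψ k C))

instance (C : Subgroup G) : (hgRes (k := k) C).PreservesHomology := by
  refine ((Functor.exact_tfae (hgRes (k := k) C)).out 1 2).1 ?_
  intro S h
  rw [CategoryTheory.ShortComplex.ShortExact.moduleCat_exact_iff_function_exact] at h ⊢
  exact h

theorem hgResTriv (C : Subgroup G) : Nonempty ((hgRes C).obj (hgTriv k G) ≅ hgTriv k C) := by
  let f : (hgRes C).obj (hgTriv k G) →ₗ[MonoidAlgebra k C] hgTriv k C :=
    { AddMonoidHom.id k with
      map_smul' := fun a s => by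
        change ((MonoidAlgebra.lift k k G 1) (hgψ k C a) * (show k from s) : k) = (MonoidAlgebra.lift k k C 1) a * (show k from s)
        congr 1
        induction a using MonoidAlgebra.induction_linear with
        | zero => simp only [map_zero]
        | add a b h h' => simp only [map_add, h, h']
        | single c r => rw [hgψ_single]; simp }
  exact ⟨(LinearEquiv.ofBijective f Function.bijective_id).toModuleIso⟩

end Res

section Coinv
variable (k : Type) [CommRing k] (S : Type) [Ring S] [Algebra k S] (P : Set (S × S))

noncomputable def cq (N : ModuleCat.{0} S) : N →+ (coinvFunctor k S P).obj N :=
  (relSub k S P N).mkQ.toAddMonoidHom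

variable {k S P} 
theorem cq_surj {N : ModuleCat.{0} S} : Function.Surjective (cq k S P N) := 
  (relSub k S P N).mkQ_surjective

theorem cq_smul {N : ModuleCat.{0} S} (r : k) (n : N) :
    cq k S P N (algebraMap k S r • n) = r • cq k S P N n := rfl

theorem cq_rel {N : ModuleCat.{0} S} {p : S × S} (hp : p ∈ P) (n : N) :
    cq k S P N (p.1 • n) = cq k S P N (p.2 • n) :=
  (Submodule.Quotient.eq _).2 (Submodule.subset_span ⟨p, hp, n, rfl⟩)

theorem cq_map {N N' : ModuleCat.{0} S} (f : N ⟶ N') (n : N) : 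
   ((coinvFunctor k S P).map f).hom (cq k S P N n) = cq k S P N' (f.hom n) := rfl

theorem cq_lift {N : ModuleCat.{0} S} {B : Type} [AddCommGroup B] [Module k B] (f : N →+ B)
    (h1 : ∀ r n, f (algebraMap k S r • n) = r • f n) 
    (h2 : ∀ p ∈ P, ∀ n, f (p.1 • n) = f (p.2 • n)) : 
    ∃ f' : (coinvFunctor k S P).obj N →ₗ[k] B, ∀ n, f' (cq k S P N n) = f n := by
  let g : (ModuleCat.restrictScalars (algebraMap k S)).obj N →ₗ[k] B :=
    { f with map_smul' := h1 }
  refine ⟨(relSub k S P N).liftQ g ?_, fun n => rfl⟩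
  rw [relSub, Submodule.span_le]
  rintro x ⟨p, hp, n, rfl⟩
  have : f (p.1 • n - p.2 • n) = 0 := by rw [map_sub, h2 p hp, sub_self]
  exact this
end Coinv

section Main
variable (k : Type) [CommRing k] (G : Type) [Group G]

noncomputable abbrev hgFH : ModuleCat.{0} (hgE k G) ⥤ ModuleCat.{0} k :=
  coinvFunctor k (MonoidAlgebra k G ⊗[k] (MonoidAlgebra k G)ᵐᵒᵖ)
      {p | ∃ a : MonoidAlgebra k G,
        p = (a ⊗ₜ[k] (1 : (MonoidAlgebra k G)ᵐᵒᵖ), (1 : MonoidAlgebra k G) ⊗ₜ[k] op a)}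

noncomputable abbrev hgFG : ModuleCat.{0} (MonoidAlgebra k G) ⥤ ModuleCat.{0} k :=
  coinvFunctor k (MonoidAlgebra k G) {p | ∃ g : G, p = (MonoidAlgebra.single g 1, 1)}

noncomputable abbrev hgT : ModuleCat.{0} (MonoidAlgebra k G) ⥤ ModuleCat.{0} k :=
  hgIndF k G ⋙ hgFH k G

variable {G}
noncomputable abbrev hgΦ (C : Subgroup G) : ModuleCat.{0} (MonoidAlgebra k G) ⥤ ModuleCat.{0} k :=
  hgRes C ⋙ hgFG k C

noncomputable def qC (C : Subgroup G) (M : ModuleCat.{0} (MonoidAlgebra k G)) :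
    M →+ (hgΦ k C).obj M :=
  cq k (MonoidAlgebra k C) {p | ∃ g : C, p = (MonoidAlgebra.single g 1, 1)} ((hgRes C).obj M)

noncomputable def qT (M : ModuleCat.{0} (MonoidAlgebra k G)) :
    hgInd k G M →+ (hgT k G).obj M :=
  cq k (hgE k G) _ ((hgIndF k G).obj M)

variable {k}
variable {M : ModuleCat.{0} (MonoidAlgebra k G)}

theorem qC_surj (C : Subgroup G) : Function.Surjective (qC k C M) := cq_surj
theorem qT_surj : Function.Surjective (qT k M) := cq_surj

theorem hgam (r : k) : algebraMap k (MonoidAlgebra k G) r = MonoidAlgebra.single 1 r := rfl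

theorem qC_smul (C : Subgroup G) (r : k) (m : M) :
    qC k C M ((MonoidAlgebra.single 1 r : MonoidAlgebra k G) • m) = r • qC k C M m := by
  refine Eq.trans ?_ (cq_smul (k := k) (S := MonoidAlgebra k C) (N := (hgRes C).obj M) r m)
  rw [hgam]
  change _ = qC k C M (hgψ k C _ • m)
  rw [hgψ_single]
  rfl

theorem qC_rel (C : Subgroup G) (c : G) (hc : c ∈ C) (m : M) :
    qC k C M ((MonoidAlgebra.single c 1 : MonoidAlgebra k G) • m) = qC k C M m := by
  have := cq_rel (k := k) (N := (hgRes C).obj M) (P := {p | ∃ g : C, p = (MonoidAlgebra.single g 1, 1)}) ⟨⟨c, hc⟩, rfl⟩ m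
  change qC k C M (hgψ k C _ • m) = qC k C M (hgψ k C 1 • m) at this
  rw [hgψ_single, map_one, one_smul] at this
  exact this

theorem qC_lift (C : Subgroup G) {B : Type} [AddCommGroup B] [Module k B] (f : M →+ B)
    (h1 : ∀ (r : k) m, f ((MonoidAlgebra.single 1 r : MonoidAlgebra k G) • m) = r • f m)
    (h2 : ∀ c ∈ C, ∀ m, f ((MonoidAlgebra.single c 1 : MonoidAlgebra k G) • m) = f m) :
    ∃ f' : (hgΦ k C).obj M →ₗ[k] B, ∀ m, f' (qC k C M m) = f m := by
  refine cq_lift (k := k) (N := (hgRes C).obj M) (P := {p | ∃ g : C, p = (MonoidAlgebra.single g 1, 1)}) f ?_ ?_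
  · intro r n
    rw [hgam]
    change f (hgψ k C _ • (show M from n)) = _
    rw [hgψ_single]
    exact h1 r n
  · rintro _ ⟨c, rfl⟩ n
    change f (hgψ k C _ • (show M from n)) = f (hgψ k C 1 • (show M from n))
    rw [hgψ_single, map_one, one_smul]
    exact h2 c c.2 n

theorem hgamE (r : k) : algebraMap k (hgE k G) r =
    MonoidAlgebra.single 1 r ⊗ₜ[k] op (MonoidAlgebra.single 1 (1:k)) := by
  rw [Algebra.TensorProduct.algebraMap_apply]
  rfl

theorem hgact1 (g x : G) (r : k) (m : M) :
    (MonoidAlgebra.single g r ⊗ₜ[k] (1 : (MonoidAlgebra k G)ᵐᵒᵖ) : hgE k G) • hgs k G x m =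
      hgs k G (g * x) (MonoidAlgebra.single g r • m) := by
  have := hgact (k := k) g 1 x r m
  rw [mul_one] at this
  exact this

theorem hgact2 (g x : G) (r : k) (m : M) :
    ((1 : MonoidAlgebra k G) ⊗ₜ[k] op (MonoidAlgebra.single g r) : hgE k G) • hgs k G x m =
      hgs k G (x * g) ((MonoidAlgebra.single 1 r : MonoidAlgebra k G) • m) := by
  have := hgact (k := k) 1 g x r m
  rw [one_mul] at this
  rw [← this]
  congr 1
  have : (MonoidAlgebra.single g r : MonoidAlgebra k G) = r • MonoidAlgebra.single g 1 := by simp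
  rw [this, MulOpposite.op_smul, ← TensorProduct.smul_tmul]
  simp [MonoidAlgebra.one_def]

theorem qT_smul (x : G) (r : k) (m : M) :
    qT k M (hgs k G x ((MonoidAlgebra.single 1 r : MonoidAlgebra k G) • m)) =
      r • qT k M (hgs k G x m) := by
  refine Eq.trans ?_ (cq_smul (k := k) (S := hgE k G) (N := (hgIndF k G).obj M) r (hgs k G x m))
  rw [hgamE]
  have := hgact (k := k) 1 1 x r m
  rw [one_mul, mul_one] at this
  rw [← this]
  rfl

theorem qT_rel (g x : G) (m : M) :
    qT k M (hgs k G (g * x) ((MonoidAlgebra.single g 1 : MonoidAlgebra k G) • m)) =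
      qT k M (hgs k G (x * g) m) := by
  have := cq_rel (k := k) (N := (hgIndF k G).obj M) (P := {p | ∃ a : MonoidAlgebra k G,
        p = (a ⊗ₜ[k] (1 : (MonoidAlgebra k G)ᵐᵒᵖ), (1 : MonoidAlgebra k G) ⊗ₜ[k] op a)})
      ⟨MonoidAlgebra.single g 1, rfl⟩ (hgs k G x m)
  have e := hgact2 (k := k) g x 1 m
  rw [← MonoidAlgebra.one_def, one_smul] at e
  rw [← hgact1, ← e]
  exact this

theorem qT_lift {B : Type} [AddCommGroup B] [Module k B] (f : hgInd k G M →+ B)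
    (h1 : ∀ x (r : k) m, f (hgs k G x ((MonoidAlgebra.single 1 r : MonoidAlgebra k G) • m)) =
      r • f (hgs k G x m))
    (h2 : ∀ g x m, f (hgs k G (g * x) ((MonoidAlgebra.single g 1 : MonoidAlgebra k G) • m)) =
      f (hgs k G (x * g) m)) :
    ∃ f' : (hgT k G).obj M →ₗ[k] B, ∀ m, f' (qT k M m) = f m := by
  refine cq_lift (k := k) (N := (hgIndF k G).obj M) (P := {p | ∃ a : MonoidAlgebra k G,
        p = (a ⊗ₜ[k] (1 : (MonoidAlgebra k G)ᵐᵒᵖ), (1 : MonoidAlgebra k G) ⊗ₜ[k] op a)}) f ?_ ?_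
  · intro r n
    change f (algebraMap k (hgE k G) r • (show hgInd k G M from n)) =
      r • f (show hgInd k G M from n)
    generalize (show hgInd k G M from n) = n
    induction n using hgInd_ind with
    | h0 => rw [smul_zero, map_zero, smul_zero]
    | ha a b h h' => rw [smul_add, map_add, map_add, smul_add, h, h']
    | hs x m =>
      refine Eq.trans ?_ (h1 x r m)
      congr 1
      have := hgact (k := k) 1 1 x r m
      rw [one_mul, mul_one] at this
      rw [hgamE, ← this]
  · rintro _ ⟨a, rfl⟩ n
    change f ((a ⊗ₜ[k] (1 : (MonoidAlgebra k G)ᵐᵒᵖ) : hgE k G) • (show hgInd k G M from n)) =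
      f (((1 : MonoidAlgebra k G) ⊗ₜ[k] op a : hgE k G) • (show hgInd k G M from n))
    generalize (show hgInd k G M from n) = n
    induction n using hgInd_ind with
    | h0 => rw [smul_zero, smul_zero]
    | ha a b h h' => rw [smul_add, map_add, smul_add, map_add, h, h']
    | hs x m =>
    induction a using MonoidAlgebra.induction_linear with
    | zero => rw [TensorProduct.zero_tmul, MulOpposite.op_zero, TensorProduct.tmul_zero]
    | add a b h h' => rw [TensorProduct.add_tmul, MulOpposite.op_add, TensorProduct.tmul_add, add_smul, add_smul, map_add, map_add, h, h']
    | single g r =>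
      rw [hgact1, hgact2, ← h2 g x, smul_smul, MonoidAlgebra.single_mul_single]
      simp

theorem hgι_ex (x : G) (M : ModuleCat.{0} (MonoidAlgebra k G)) :
    ∃ f' : (hgΦ k (Subgroup.centralizer {x})).obj M →ₗ[k] (hgT k G).obj M, 
    ∀ m, f' (qC k _ M m) = qT k M (hgs k G x m) := by
  refine qC_lift (Subgroup.centralizer {x}) ((qT k M).comp (hgs k G x)) ?_ ?_
  · intro r m
    exact qT_smul x r m
  · intro c hc m
    have h := Subgroup.mem_centralizer_singleton_iff.1 hc
    have := qT_rel (k := k) c (x * c⁻¹) m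
    rw [inv_mul_cancel_right, ← mul_assoc, h, mul_inv_cancel_right] at this
    exact this

noncomputable def hgι (x : G) : hgΦ k (Subgroup.centralizer {x}) ⟶ hgT k G where
  app M := ModuleCat.ofHom (hgι_ex x M).choose
  naturality M N f := by
    apply ModuleCat.hom_ext
    apply LinearMap.ext
    intro z
    obtain ⟨m, rfl⟩ := qC_surj _ z
    change (hgι_ex x N).choose (qC k _ N (f.hom m)) = ((hgT k G).map f).hom ((hgι_ex x M).choose (qC k _ M m))
    rw [(hgι_ex x N).choose_spec, (hgι_ex x M).choose_spec]
    refine Eq.trans ?_ (cq_map ((hgIndF k G).map f) (hgs k G x m)).symm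
    change _ = qT k N (hgmap f.hom _)
    rw [hgmap_s]

theorem hgι_app (x : G) (m : M) : ((hgι x).app M).hom (qC k _ M m) = qT k M (hgs k G x m) :=
  (hgι_ex x M).choose_spec m

open DirectSum in
theorem hg_bij [DecidableEq (ConjClasses G)] (rep : ConjClasses G → G)
    (hrep : ∀ c, ConjClasses.mk (rep c) = c) (M : ModuleCat.{0} (MonoidAlgebra k G)) :
    Function.Bijective (DirectSum.toModule k (ConjClasses G) ((hgT k G).obj M)
      (fun c => ((hgι (rep c)).app M).hom)) := by
  have ht : ∀ x, ∃ t : G, t * x * t⁻¹ = rep (ConjClasses.mk x) := fun x => by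
    have := ConjClasses.mk_eq_mk_iff_isConj.1 (hrep (ConjClasses.mk x)).symm
    exact isConj_iff.1 this
  choose t ht using ht
  let Q : ∀ c : ConjClasses G, M →+ ⨁ c, (hgΦ k (Subgroup.centralizer {rep c})).obj M := fun c =>
    (DirectSum.lof k (ConjClasses G) (fun c => (hgΦ k (Subgroup.centralizer {rep c})).obj M) c).toAddMonoidHom.comp
      (qC k (Subgroup.centralizer {rep c}) M)
  have hQs : ∀ c (r : k) m, Q c ((MonoidAlgebra.single 1 r : MonoidAlgebra k G) • m) = r • Q c m := by
    intro c r m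
    change DirectSum.lof k (ConjClasses G) (fun c => (hgΦ k (Subgroup.centralizer {rep c})).obj M) c
        (qC k (Subgroup.centralizer {rep c}) M _) =
      r • DirectSum.lof k (ConjClasses G) (fun c => (hgΦ k (Subgroup.centralizer {rep c})).obj M) c
        (qC k (Subgroup.centralizer {rep c}) M _)
    rw [qC_smul, map_smul]
  have hQr : ∀ c, ∀ g ∈ Subgroup.centralizer {rep c}, ∀ m, Q c ((MonoidAlgebra.single g 1 : MonoidAlgebra k G) • m) = Q c m := by
    intro c g hg m
    exact congrArg (DirectSum.lof k _ _ c) (qC_rel _ g hg m)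
  have L1 : ∀ c x g m, ConjClasses.mk x = c → g * x * g⁻¹ = rep c →
      Q (ConjClasses.mk x) ((MonoidAlgebra.single (t x) 1 : MonoidAlgebra k G) • m) =
      Q c ((MonoidAlgebra.single g 1 : MonoidAlgebra k G) • m) := by
    rintro _ x g m rfl hg
    rw [← hQr (ConjClasses.mk x) (g * (t x)⁻¹) ?_ ((MonoidAlgebra.single (t x) 1 : MonoidAlgebra k G) • m)]
    · rw [smul_smul, MonoidAlgebra.single_mul_single]; simp
    · rw [Subgroup.mem_centralizer_singleton_iff]
      nth_rewrite 1 [← ht x]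
      rw [← hg]
      group
  let B0 : hgInd k G M →+ ⨁ c, (hgΦ k (Subgroup.centralizer {rep c})).obj M :=
    hgElift fun x => (Q (ConjClasses.mk x)).comp (DistribSMul.toAddMonoidHom M (MonoidAlgebra.single (t x) 1 : MonoidAlgebra k G))
  have hB0 : ∀ x m, B0 (hgs k G x m) = Q (ConjClasses.mk x) ((MonoidAlgebra.single (t x) 1 : MonoidAlgebra k G) • m) :=
    fun x m => hgElift_s _ x m
  obtain ⟨B, hB⟩ := qT_lift B0 (by
    intro x r m
    rw [hB0, hB0, ← hQs, smul_smul, smul_smul, MonoidAlgebra.single_mul_single, MonoidAlgebra.single_mul_single]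
    simp) (by
    intro g x m
    rw [hB0, hB0, smul_smul, MonoidAlgebra.single_mul_single, one_mul]
    refine (L1 _ _ _ _ ?_ ?_).symm
    · apply ConjClasses.mk_eq_mk_iff_isConj.2
      exact isConj_iff.2 ⟨g, by group⟩
    · rw [← ht]
      group)
  constructor
  · have : B ∘ₗ (DirectSum.toModule k (ConjClasses G) ((hgT k G).obj M)
      (fun c => ((hgι (rep c)).app M).hom)) = LinearMap.id := by
      refine DirectSum.linearMap_ext _ fun c => LinearMap.ext fun z => ?_
      obtain ⟨m, rfl⟩ := qC_surj _ z
      simp only [LinearMap.comp_apply, DirectSum.toModule_lof, LinearMap.id_apply]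
      rw [hgι_app, hB, hB0, L1 c (rep c) 1 m (hrep c) (by simp), ← MonoidAlgebra.one_def, one_smul]
      rfl
    exact Function.LeftInverse.injective (g := B) fun z => DFunLike.congr_fun this z
  · rw [← LinearMap.range_eq_top, eq_top_iff]
    rintro z -
    obtain ⟨z, rfl⟩ := qT_surj z
    induction z using hgInd_ind with
    | h0 => rw [map_zero]; exact zero_mem _
    | ha a b h h' => rw [map_add]; exact add_mem h h'
    | hs x m =>
      refine ⟨Q (ConjClasses.mk x) ((MonoidAlgebra.single (t x) 1 : MonoidAlgebra k G) • m), ?_⟩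
      change DirectSum.toModule k (ConjClasses G) ((hgT k G).obj M) _ 
        (DirectSum.lof k (ConjClasses G) (fun c => (hgΦ k (Subgroup.centralizer {rep c})).obj M) (ConjClasses.mk x)
          (qC k (Subgroup.centralizer {rep (ConjClasses.mk x)}) M _)) = _
      rw [DirectSum.toModule_lof, hgι_app, ← ht]
      have := qT_rel (k := k) (t x) (x * (t x)⁻¹) m
      rw [inv_mul_cancel_right, ← mul_assoc] at this
      exact this

end Main

open DirectSum in
/-- For a group `G` and a field `k`, the Hochschild homology of the group algebra `k[G]`
decomposes as `HH_n(k[G], k[G]) ≅ ⊕_{c ∈ ⟨G⟩} H_n(C_G(g_c); k)`, the direct sum over the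
conjugacy classes `c` of `G` of the group homology of the centralizer of a chosen
representative `g_c` of `c`. -/
theorem hochschildHomology_groupAlgebra (k : Type) [Field k] (G : Type) [Group G]
    (rep : ConjClasses G → G) (hrep : ∀ c, ConjClasses.mk (rep c) = c) (n : ℕ) :
    Nonempty ((HochschildHomology k (MonoidAlgebra k G) n) ≃ₗ[k]
      (⨁ c : ConjClasses G, GroupHomology k (Subgroup.centralizer {rep c}) n)) := by
  classical
  let P : ProjectiveResolution (hgTriv k G) := ProjectiveResolution.of _
  obtain ⟨e⟩ := hgIndTriv (k := k) (G := G)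
  obtain ⟨i1⟩ := hgder (hgIndF k G) (hgFH k G) P e n
  have i2 : ∀ c, Nonempty (GroupHomology k (Subgroup.centralizer {rep c}) n ≅ 
      ((P.complex.sc n).map (hgΦ k (Subgroup.centralizer {rep c}))).homology) := fun c => by
    obtain ⟨e⟩ := hgResTriv (k := k) (Subgroup.centralizer {rep c})
    exact hgder (hgRes _) (hgFG k _) P e n
  obtain ⟨s⟩ := hgsum (fun c => hgΦ k (Subgroup.centralizer {rep c})) (hgT k G)
    (fun c => hgι (rep c)) (hg_bij rep hrep) (P.complex.sc n)
  exact ⟨i1.toLinearEquiv ≪≫ₗ s ≪≫ₗ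
    DFinsupp.mapRange.linearEquiv fun c => (i2 c).some.symm.toLinearEquiv⟩
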